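/- arXiv:2401.15811 — 2 statements merged into one kernel-verified Lean document; each statement's English description precedes it below -/
import Mathlib

section
/- Consider the naive seller-side experiment with feedback loops under a fixed partition {1,…,N} = 𝒯 ⊔ 𝒞, with ê_i^C(t) = ê_i^T(t) for all i and t, with a common pacing function Ψ^T = Ψ^C = Ψ, and under Assumptions 1–3 (monotonicity of f_i and Ψ, nonnegative outcomes, uniform treatment effect e_i^T(t) ≥ e_i^C(t) ≥ 0, continuity, and finitely many zero-crossing times of the threshold functions). Suppose the experiment dynamics, the global treatment dynamics, and the global control dynamics each admit solutions with common initial states S_i^{E}(0) = S_i^{GT}(0) = S_i^{GC}(0). Then for every seller i = 1,…,N and every t ∈ [0,H], ∫₀^t O_i^{E}(s) ds ≥ ∫₀^t O_i^{GC}(s) ds. -/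
/-- Raising the coordinates in `B` and lowering those outside `B` raises `∑_{B} f_j`. -/
theorem aux_sum_le {N : ℕ} (f : Fin N → (Fin N → ℝ) → ℝ → ℝ)
    (hf_anti : ∀ (i j : Fin N), j ≠ i → ∀ (r : Fin N → ℝ) (R₀ x y : ℝ), x ≤ y →
      f i (Function.update r j y) R₀ ≤ f i (Function.update r j x) R₀)
    (hf_sum_mono : ∀ (I : Finset (Fin N)) (i : Fin N), i ∈ I →
      ∀ (r : Fin N → ℝ) (R₀ x y : ℝ), x ≤ y →
      ∑ j ∈ I, f j (Function.update r i x) R₀ ≤ ∑ j ∈ I, f j (Function.update r i y) R₀)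
    (B : Finset (Fin N)) (r r' : Fin N → ℝ) (R₀ : ℝ)
    (h1 : ∀ i ∈ B, r i ≤ r' i) (h2 : ∀ i, i ∉ B → r' i ≤ r i) :
    ∑ j ∈ B, f j r R₀ ≤ ∑ j ∈ B, f j r' R₀ := by
  have key : ∀ A : Finset (Fin N),
      ∑ j ∈ B, f j r R₀ ≤ ∑ j ∈ B, f j (A.piecewise r' r) R₀ := by
    intro A
    induction A using Finset.induction_on with
    | empty => simp
    | insert k A hk ih =>
      refine ih.trans ?_
      rw [Finset.piecewise_insert]
      have e : A.piecewise r' r = Function.update (A.piecewise r' r) k (r k) := by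
        rw [eq_comm, Function.update_eq_self_iff]
        simp [hk]
      by_cases hB : k ∈ B
      · have := hf_sum_mono B k hB (A.piecewise r' r) R₀ (r k) (r' k) (h1 k hB)
        rwa [← e] at this
      · refine Finset.sum_le_sum fun j hj => ?_
        have hne : k ≠ j := fun h => hB (h ▸ hj)
        have := hf_anti j k hne (A.piecewise r' r) R₀ (r' k) (r k) (h2 k hB)
        rwa [← e] at this
  simpa using key Finset.univ

/-- A continuous function without zeros on an open interval has constant sign there. -/
theorem aux_sign {g : ℝ → ℝ} {x z : ℝ} (hg : ContinuousOn g (Set.Ioo x z))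
    (h0 : ∀ s ∈ Set.Ioo x z, g s ≠ 0) {s t : ℝ} (hs : s ∈ Set.Ioo x z)
    (ht : t ∈ Set.Ioo x z) (h : 0 ≤ g s) : 0 ≤ g t := by
  by_contra! hlt
  obtain ⟨u, hu, hu0⟩ := isPreconnected_Ioo.intermediate_value ht hs hg ⟨hlt.le, h⟩
  exact h0 u hu hu0


/-- symmetric lower-bound pathwise claim in the proof of Theorem 1: naive
seller-side experiment with feedback loops under a fixed partition `𝒯 = T`,
`𝒞 = Tᶜ`, with `ê_i^C = ê_i^T`, common pacing function `Ψ`, Assumptions 1–3,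
and solutions of the experiment / global-treatment / global-control dynamics
with common initial states. Then the cumulative experimental outcome of each
seller is bounded below by its global-control counterpart. -/
theorem stmt7 (N : ℕ) (H : ℝ) (hH : 0 < H)
    (eT eC ehT ehC : Fin N → ℝ → ℝ) (R : ℝ → ℝ)
    (f : Fin N → (Fin N → ℝ) → ℝ → ℝ) (Ψ : ℝ → ℝ → ℝ)
    (T : Finset (Fin N))
    (heq : ∀ (i : Fin N) (t : ℝ), t ∈ Set.Icc (0 : ℝ) H → ehC i t = ehT i t)
    -- Assumption 1.(1): f_i non-increasing in r_j (j ≠ i), and the sum over any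
    -- index set containing i is non-decreasing in r_i
    (hf_anti : ∀ (i j : Fin N), j ≠ i → ∀ (r : Fin N → ℝ) (R₀ x y : ℝ), x ≤ y →
      f i (Function.update r j y) R₀ ≤ f i (Function.update r j x) R₀)
    (hf_sum_mono : ∀ (I : Finset (Fin N)) (i : Fin N), i ∈ I →
      ∀ (r : Fin N → ℝ) (R₀ x y : ℝ), x ≤ y →
      ∑ j ∈ I, f j (Function.update r i x) R₀ ≤ ∑ j ∈ I, f j (Function.update r i y) R₀)
    -- Assumption 1.(2): Ψ non-increasing in the state
    (hΨ_anti : ∀ e : ℝ, ∀ s s' : ℝ, s ≤ s' → Ψ s' e ≤ Ψ s e)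
    -- Assumption 1.(4): Ψ non-decreasing in the estimated score
    (hΨ_mono : ∀ s : ℝ, ∀ e e' : ℝ, e ≤ e' → Ψ s e ≤ Ψ s e')
    -- Assumption 2: nonnegative outcomes, uniform treatment effect
    (he_nonneg : ∀ (i : Fin N) (t : ℝ), t ∈ Set.Icc (0 : ℝ) H → 0 ≤ eC i t)
    (he_mono : ∀ (i : Fin N) (t : ℝ), t ∈ Set.Icc (0 : ℝ) H → eC i t ≤ eT i t)
    -- processes
    (SE rE fNE IE OE : Fin N → ℝ → ℝ)
    (SGT rGT fGT IGT OGT : Fin N → ℝ → ℝ)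
    (SGC rGC fGC IGC OGC : Fin N → ℝ → ℝ)
    -- Assumption 3: continuity and finitely many zero-crossing times
    (hcont_e : ∀ i : Fin N, ContinuousOn (eT i) (Set.Icc 0 H) ∧
      ContinuousOn (eC i) (Set.Icc 0 H) ∧ ContinuousOn (ehT i) (Set.Icc 0 H) ∧
      ContinuousOn (ehC i) (Set.Icc 0 H))
    (hcont_R : Continuous R)
    (hcont_f : ∀ i : Fin N, Continuous (fun x : (Fin N → ℝ) × ℝ => f i x.1 x.2))
    (hcont_Ψ : Continuous (fun x : ℝ × ℝ => Ψ x.1 x.2))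
    (hfin : Set.Finite {t : ℝ | t ∈ Set.Icc (0 : ℝ) H ∧
      ∃ i : Fin N, fNE i t = 0 ∨ fGT i t = 0 ∨ fGC i t = 0})
    -- common initial states
    (hS0 : ∀ i : Fin N, SE i 0 = SGT i 0 ∧ SE i 0 = SGC i 0)
    -- naive experiment dynamics
    (hrE : ∀ (i : Fin N) (t : ℝ), t ∈ Set.Icc (0 : ℝ) H →
      rE i t = Ψ (SE i t) (if i ∈ T then ehT i t else ehC i t))
    (hfNE : ∀ (i : Fin N) (t : ℝ), t ∈ Set.Icc (0 : ℝ) H →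
      fNE i t = f i (fun j => rE j t) (R t))
    (hIE : ∀ (i : Fin N) (t : ℝ), t ∈ Set.Icc (0 : ℝ) H →
      IE i t = if 0 ≤ fNE i t then 1 else 0)
    (hOE : ∀ (i : Fin N) (t : ℝ), t ∈ Set.Icc (0 : ℝ) H →
      OE i t = IE i t * (if i ∈ T then eT i t else eC i t))
    (hOE_int : ∀ i : Fin N, IntervalIntegrable (OE i) MeasureTheory.volume 0 H)
    (hSE : ∀ (i : Fin N) (t : ℝ), t ∈ Set.Icc (0 : ℝ) H →
      SE i t = SE i 0 + ∫ s in (0:ℝ)..t, OE i s)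
    -- global treatment dynamics
    (hrGT : ∀ (i : Fin N) (t : ℝ), t ∈ Set.Icc (0 : ℝ) H →
      rGT i t = Ψ (SGT i t) (ehT i t))
    (hfGT : ∀ (i : Fin N) (t : ℝ), t ∈ Set.Icc (0 : ℝ) H →
      fGT i t = f i (fun j => rGT j t) (R t))
    (hIGT : ∀ (i : Fin N) (t : ℝ), t ∈ Set.Icc (0 : ℝ) H →
      IGT i t = if 0 ≤ fGT i t then 1 else 0)
    (hOGT : ∀ (i : Fin N) (t : ℝ), t ∈ Set.Icc (0 : ℝ) H →
      OGT i t = IGT i t * eT i t)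
    (hOGT_int : ∀ i : Fin N, IntervalIntegrable (OGT i) MeasureTheory.volume 0 H)
    (hSGT : ∀ (i : Fin N) (t : ℝ), t ∈ Set.Icc (0 : ℝ) H →
      SGT i t = SGT i 0 + ∫ s in (0:ℝ)..t, OGT i s)
    -- global control dynamics
    (hrGC : ∀ (i : Fin N) (t : ℝ), t ∈ Set.Icc (0 : ℝ) H →
      rGC i t = Ψ (SGC i t) (ehC i t))
    (hfGC : ∀ (i : Fin N) (t : ℝ), t ∈ Set.Icc (0 : ℝ) H →
      fGC i t = f i (fun j => rGC j t) (R t))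
    (hIGC : ∀ (i : Fin N) (t : ℝ), t ∈ Set.Icc (0 : ℝ) H →
      IGC i t = if 0 ≤ fGC i t then 1 else 0)
    (hOGC : ∀ (i : Fin N) (t : ℝ), t ∈ Set.Icc (0 : ℝ) H →
      OGC i t = IGC i t * eC i t)
    (hOGC_int : ∀ i : Fin N, IntervalIntegrable (OGC i) MeasureTheory.volume 0 H)
    (hSGC : ∀ (i : Fin N) (t : ℝ), t ∈ Set.Icc (0 : ℝ) H →
      SGC i t = SGC i 0 + ∫ s in (0:ℝ)..t, OGC i s) :
    ∀ (i : Fin N) (t : ℝ), t ∈ Set.Icc (0 : ℝ) H →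
      ∫ s in (0:ℝ)..t, OGC i s ≤ ∫ s in (0:ℝ)..t, OE i s := by
  -- continuity of the processes
  have hsub : ∀ {t : ℝ}, t ∈ Set.Icc (0 : ℝ) H → Set.uIcc 0 t ⊆ Set.uIcc 0 H := by
    intro t ht
    rw [Set.uIcc_of_le ht.1, Set.uIcc_of_le hH.le]
    exact Set.Icc_subset_Icc_right ht.2
  have hprim : ∀ O : ℝ → ℝ, IntervalIntegrable O MeasureTheory.volume 0 H →
      ContinuousOn (fun t => ∫ s in (0:ℝ)..t, O s) (Set.Icc 0 H) := by
    intro O hO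
    have := intervalIntegral.continuousOn_primitive_interval' hO Set.left_mem_uIcc
    rwa [Set.uIcc_of_le hH.le] at this
  have hcSE : ∀ i, ContinuousOn (SE i) (Set.Icc 0 H) := fun i =>
    (continuousOn_const.add (hprim _ (hOE_int i))).congr (fun t ht => hSE i t ht)
  have hcSC : ∀ i, ContinuousOn (SGC i) (Set.Icc 0 H) := fun i =>
    (continuousOn_const.add (hprim _ (hOGC_int i))).congr (fun t ht => hSGC i t ht)
  have hrE' : ∀ (i : Fin N) (t : ℝ), t ∈ Set.Icc (0 : ℝ) H →
      rE i t = Ψ (SE i t) (ehC i t) := by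
    intro i t ht
    rw [hrE i t ht, heq i t ht, ite_self]
  have hcr : ∀ S r : ℝ → ℝ, ∀ i, ContinuousOn S (Set.Icc 0 H) →
      (∀ t ∈ Set.Icc (0:ℝ) H, r t = Ψ (S t) (ehC i t)) → ContinuousOn r (Set.Icc 0 H) := by
    intro S r i hS hr
    exact (hcont_Ψ.comp_continuousOn (hS.prodMk (hcont_e i).2.2.2)).congr hr
  have hcf : ∀ (r : Fin N → ℝ → ℝ) (g : ℝ → ℝ) (i : Fin N),
      (∀ j, ContinuousOn (r j) (Set.Icc 0 H)) →
      (∀ t ∈ Set.Icc (0:ℝ) H, g t = f i (fun j => r j t) (R t)) →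
      ContinuousOn g (Set.Icc 0 H) := by
    intro r g i hr hg
    exact ((hcont_f i).comp_continuousOn
      ((continuousOn_pi.2 hr).prodMk hcont_R.continuousOn)).congr hg
  have hcNE : ∀ i, ContinuousOn (fNE i) (Set.Icc 0 H) := fun i =>
    hcf rE (fNE i) i (fun j => hcr _ _ j (hcSE j) (hrE' j)) (hfNE i)
  have hcGC : ∀ i, ContinuousOn (fGC i) (Set.Icc 0 H) := fun i =>
    hcf rGC (fGC i) i (fun j => hcr _ _ j (hcSC j) (hrGC j)) (hfGC i)
  -- continuous induction
  have main : Set.Icc 0 H ⊆ {t : ℝ | ∀ i, 0 ≤ SE i t - SGC i t} := by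
    apply IsClosed.Icc_subset_of_forall_exists_gt
    · have : {t : ℝ | ∀ i, 0 ≤ SE i t - SGC i t} ∩ Set.Icc 0 H
          = Set.Icc 0 H ∩ (fun t => fun i => SE i t - SGC i t) ⁻¹' (Set.Ici 0) := by
        ext t
        simp [Pi.le_def, and_comm]
      rw [this]
      exact (continuousOn_pi.2 fun i => (hcSE i).sub (hcSC i)).preimage_isClosed_of_isClosed
        isClosed_Icc isClosed_Ici
    · intro i
      rw [(hS0 i).2]
      simp
    · rintro x ⟨hx, hx0, hxH⟩ y hy
      simp only [Set.mem_setOf_eq] at hx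
      set Z := {t : ℝ | t ∈ Set.Icc (0 : ℝ) H ∧
        ∃ i : Fin N, fNE i t = 0 ∨ fGT i t = 0 ∨ fGC i t = 0} with hZ
      have hev : (Z \ {x})ᶜ ∈ nhds x :=
        (hfin.subset Set.diff_subset).isClosed.isOpen_compl.mem_nhds (by simp)
      obtain ⟨z₀, hz₀, hz₀Z⟩ := exists_Ico_subset_of_mem_nhds hev ⟨H, hxH⟩
      obtain ⟨z, hxz, hz⟩ : ∃ z, x < z ∧ z ≤ z₀ ∧ z ≤ y ∧ z ≤ H :=
        ⟨min z₀ (min y H), by simp [hz₀, hxH, Set.mem_Ioi.1 hy], by simp⟩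
      obtain ⟨hzz, hzy, hzH⟩ := hz
      have hIoo : Set.Ioo x z ⊆ Set.Icc 0 H := fun s hs =>
        ⟨hx0.trans hs.1.le, hs.2.le.trans hzH⟩
      have hnZ : ∀ s ∈ Set.Ioo x z, s ∉ Z := fun s hs hsZ =>
        hz₀Z ⟨hs.1.le, hs.2.trans_le hzz⟩ ⟨hsZ, hs.1.ne'⟩
      have hnNE : ∀ i, ∀ s ∈ Set.Ioo x z, fNE i s ≠ 0 := fun i s hs h =>
        hnZ s hs ⟨hIoo hs, i, Or.inl h⟩
      have hnGC : ∀ i, ∀ s ∈ Set.Ioo x z, fGC i s ≠ 0 := fun i s hs h =>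
        hnZ s hs ⟨hIoo hs, i, Or.inr (Or.inr h)⟩
      obtain ⟨t, ht⟩ := exists_between hxz
      have htI : t ∈ Set.Icc 0 H := hIoo ht
      have hxI : x ∈ Set.Icc 0 H := ⟨hx0, hxH.le⟩
      refine ⟨t, ?_, ht.1, ht.2.le.trans hzy⟩
      -- if the difference is negative at `t`, the indicators are known
      have hneg : ∀ i, SE i t - SGC i t < 0 → fNE i t < 0 ∧ 0 ≤ fGC i t := by
        intro i hi
        by_contra hcon
        have hle : ∀ s ∈ Set.Ioo x t, OGC i s ≤ OE i s := by
          intro s hs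
          have hs' : s ∈ Set.Ioo x z := ⟨hs.1, hs.2.trans ht.2⟩
          have hsI := hIoo hs'
          have h0 := he_nonneg i s hsI
          have h1 := he_mono i s hsI
          have hE : eC i s ≤ (if i ∈ T then eT i s else eC i s) := by
            split_ifs
            · exact h1
            · exact le_rfl
          rw [hOGC i s hsI, hOE i s hsI, hIGC i s hsI, hIE i s hsI]
          by_cases hN : 0 ≤ fNE i t
          · have : 0 ≤ fNE i s := aux_sign ((hcNE i).mono hIoo) (hnNE i) ht hs' hN
            rw [if_pos this, one_mul]
            by_cases hG : 0 ≤ fGC i s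
            · rw [if_pos hG, one_mul]; exact hE
            · rw [if_neg hG, zero_mul]; exact h0.trans hE
          · have hG : ¬ 0 ≤ fGC i t := fun h => hcon ⟨not_le.1 hN, h⟩
            have hG' : ¬ 0 ≤ fGC i s := fun h =>
              hG (aux_sign ((hcGC i).mono hIoo) (hnGC i) hs' ht h)
            rw [if_neg hG', zero_mul]
            by_cases hN' : 0 ≤ fNE i s
            · rw [if_pos hN', one_mul]; exact h0.trans hE
            · rw [if_neg hN', zero_mul]
        have iE : ∀ {u}, u ∈ Set.Icc (0:ℝ) H →
            IntervalIntegrable (OE i) MeasureTheory.volume 0 u :=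
          fun hu => (hOE_int i).mono_set (hsub hu)
        have iC : ∀ {u}, u ∈ Set.Icc (0:ℝ) H →
            IntervalIntegrable (OGC i) MeasureTheory.volume 0 u :=
          fun hu => (hOGC_int i).mono_set (hsub hu)
        have hint := intervalIntegral.integral_mono_on_of_le_Ioo ht.1.le
          ((iC hxI).symm.trans (iC htI)) ((iE hxI).symm.trans (iE htI)) hle
        have e1 := intervalIntegral.integral_interval_sub_left (iE htI) (iE hxI)
        have e2 := intervalIntegral.integral_interval_sub_left (iC htI) (iC hxI)
        have a1 := hSE i t htI
        have a2 := hSE i x hxI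
        have a3 := hSGC i t htI
        have a4 := hSGC i x hxI
        have a5 := hx i
        linarith
      intro i
      by_contra hi
      rw [not_le] at hi
      set B : Finset (Fin N) := Finset.univ.filter (fun j => SE j t - SGC j t < 0) with hB
      have hsum := aux_sum_le f hf_anti hf_sum_mono B (fun j => rGC j t) (fun j => rE j t) (R t)
        (by
          intro j hj
          have hj' : SE j t - SGC j t < 0 := by simpa [hB] using hj
          simp only [hrGC j t htI, hrE' j t htI]
          exact hΨ_anti _ _ _ (by linarith))
        (by
          intro j hj
          have hj' : 0 ≤ SE j t - SGC j t := by simpa [hB] using hj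
          simp only [hrGC j t htI, hrE' j t htI]
          exact hΨ_anti _ _ _ (by linarith))
      have hpos : 0 ≤ ∑ j ∈ B, f j (fun j => rGC j t) (R t) :=
        Finset.sum_nonneg fun j hj => by
          rw [← hfGC j t htI]
          exact (hneg j (Finset.mem_filter.1 hj).2).2
      have hlt : ∑ j ∈ B, f j (fun j => rE j t) (R t) < 0 :=
        Finset.sum_neg (fun j hj => by
          rw [← hfNE j t htI]
          exact (hneg j (Finset.mem_filter.1 hj).2).1) ⟨i, Finset.mem_filter.2 ⟨Finset.mem_univ _, hi⟩⟩
      linarith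
  intro i t ht
  have h := main ht i
  have a1 := hSE i t ht
  have a3 := hSGC i t ht
  have a5 := (hS0 i).2
  linarith
end

section
/- Consider the counterfactual interleaving experiment with feedback loops under a fixed partition {1,…,N} = 𝒯 ⊔ 𝒞, with e_i^C(t) = e_i^T(t) ≥ 0 for all i and t, and under Assumptions 1, 3, and 5 (monotonicity of f_i and of Ψ^T, Ψ^C; continuity and finitely many zero-crossing times of the threshold functions; and existence of α > 1 with Ψ^T(s, ê_i^T(t)) = α·Ψ^C(s, ê_i^C(t)) for all s ≥ 0, i, t, and f_i((αr_1,…,αr_N), R) ≥ f_i((r_1,…,r_N), R) whenever f_i((r_1,…,r_N), R) ≥ 0). Suppose the experiment dynamics, the global treatment dynamics, and the global control dynamics each admit solutions with common initial states. Then for every seller i = 1,…,N and every t ∈ [0,H], ∫₀^t O_i^{E}(s) ds ≤ ∫₀^t O_i^{GT}(s) ds and ∫₀^t O_i^{E}(s) ds ≥ ∫₀^t O_i^{GC}(s) ds. -/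
lemma aux_vec {N : ℕ} (f : Fin N → (Fin N → ℝ) → ℝ → ℝ)
    (hf_anti : ∀ (i j : Fin N), j ≠ i → ∀ (r : Fin N → ℝ) (R₀ x y : ℝ), x ≤ y →
      f i (Function.update r j y) R₀ ≤ f i (Function.update r j x) R₀)
    (hf_sum_mono : ∀ (I : Finset (Fin N)) (i : Fin N), i ∈ I →
      ∀ (r : Fin N → ℝ) (R₀ x y : ℝ), x ≤ y →
      ∑ j ∈ I, f j (Function.update r i x) R₀ ≤ ∑ j ∈ I, f j (Function.update r i y) R₀)
    (R₀ : ℝ) (a b : Fin N → ℝ) (I : Finset (Fin N))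
    (h1 : ∀ i ∈ I, a i ≤ b i) (h2 : ∀ i, i ∉ I → b i ≤ a i) :
    ∑ j ∈ I, f j a R₀ ≤ ∑ j ∈ I, f j b R₀ := by
  have key : ∀ s : Finset (Fin N),
      ∑ j ∈ I, f j a R₀ ≤ ∑ j ∈ I, f j (s.piecewise b a) R₀ := by
    intro s
    induction s using Finset.induction_on with
    | empty => simp
    | insert k s hk ih =>
      refine ih.trans ?_
      rw [Finset.piecewise_insert]
      have e : s.piecewise b a = Function.update (s.piecewise b a) k (a k) := by
        rw [eq_comm, Function.update_eq_self_iff]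
        simp [hk]
      conv_lhs => rw [e]
      by_cases hkI : k ∈ I
      · exact hf_sum_mono I k hkI _ _ _ _ (h1 k hkI)
      · refine Finset.sum_le_sum fun j hj => hf_anti j k ?_ _ _ _ _ (h2 k hkI)
        rintro rfl
        exact hkI hj
  simpa using key Finset.univ

lemma aux_sign_s12 {g : ℝ → ℝ} {x z : ℝ} (hg : ContinuousOn g (Set.Ioc x z))
    (hz : ∀ t ∈ Set.Ioc x z, g t ≠ 0) (hxz : x < z) :
    (g z < 0 → ∀ t ∈ Set.Ioc x z, g t < 0) ∧ (0 ≤ g z → ∀ t ∈ Set.Ioc x z, 0 ≤ g t) := by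
  have hzz : z ∈ Set.Ioc x z := ⟨hxz, le_rfl⟩
  constructor
  · intro h t ht
    by_contra hc
    push Not at hc
    obtain ⟨u, hu, hu0⟩ := isPreconnected_Ioc.intermediate_value hzz ht hg ⟨h.le, hc⟩
    exact hz u hu hu0
  · intro h t ht
    by_contra hc
    push Not at hc
    obtain ⟨u, hu, hu0⟩ := isPreconnected_Ioc.intermediate_value ht hzz hg ⟨hc.le, h⟩
    exact hz u hu hu0

lemma aux_contS {H : ℝ} (hH : 0 < H) {S O : ℝ → ℝ}
    (hint : IntervalIntegrable O MeasureTheory.volume 0 H)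
    (hS : ∀ t ∈ Set.Icc (0 : ℝ) H, S t = S 0 + ∫ s in (0:ℝ)..t, O s) :
    ContinuousOn S (Set.Icc 0 H) := by
  have h := intervalIntegral.continuousOn_primitive_interval' hint Set.left_mem_uIcc
  rw [Set.uIcc_of_le hH.le] at h
  exact (continuousOn_const.add h).congr hS

lemma aux_contf {N : ℕ} {H : ℝ} (f : (Fin N → ℝ) → ℝ → ℝ)
    (hf : Continuous (fun x : (Fin N → ℝ) × ℝ => f x.1 x.2))
    (Ψ : ℝ → ℝ → ℝ) (hΨ : Continuous (fun x : ℝ × ℝ => Ψ x.1 x.2))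
    (R : ℝ → ℝ) (hR : Continuous R) (S eh r : Fin N → ℝ → ℝ) (g : ℝ → ℝ)
    (hS : ∀ i, ContinuousOn (S i) (Set.Icc 0 H))
    (heh : ∀ i, ContinuousOn (eh i) (Set.Icc 0 H))
    (hr : ∀ (i : Fin N) (t : ℝ), t ∈ Set.Icc (0 : ℝ) H → r i t = Ψ (S i t) (eh i t))
    (hg : ∀ (t : ℝ), t ∈ Set.Icc (0 : ℝ) H → g t = f (fun j => r j t) (R t)) :
    ContinuousOn g (Set.Icc 0 H) := by
  have hrc : ∀ i, ContinuousOn (r i) (Set.Icc 0 H) := fun i =>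
    (hΨ.comp_continuousOn ((hS i).prodMk (heh i))).congr (hr i)
  exact (hf.comp_continuousOn ((continuousOn_pi.2 hrc).prodMk hR.continuousOn)).congr hg

lemma aux_main {N : ℕ} {H : ℝ} (hH : 0 < H) (f : Fin N → (Fin N → ℝ) → ℝ → ℝ)
    (hf_anti : ∀ (i j : Fin N), j ≠ i → ∀ (r : Fin N → ℝ) (R₀ x y : ℝ), x ≤ y →
      f i (Function.update r j y) R₀ ≤ f i (Function.update r j x) R₀)
    (hf_sum_mono : ∀ (I : Finset (Fin N)) (i : Fin N), i ∈ I →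
      ∀ (r : Fin N → ℝ) (R₀ x y : ℝ), x ≤ y →
      ∑ j ∈ I, f j (Function.update r i x) R₀ ≤ ∑ j ∈ I, f j (Function.update r i y) R₀)
    (hf : ∀ i : Fin N, Continuous (fun x : (Fin N → ℝ) × ℝ => f i x.1 x.2))
    (Ψ : ℝ → ℝ → ℝ) (hΨ : Continuous (fun x : ℝ × ℝ => Ψ x.1 x.2))
    (hΨ_anti : ∀ e : ℝ, ∀ s s' : ℝ, s ≤ s' → Ψ s' e ≤ Ψ s e)
    (R : ℝ → ℝ) (hR : Continuous R) (eh : Fin N → ℝ → ℝ)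
    (heh : ∀ i, ContinuousOn (eh i) (Set.Icc 0 H))
    (SA rA fA OA SB rB fB OB : Fin N → ℝ → ℝ)
    (hfin : Set.Finite {t : ℝ | t ∈ Set.Icc (0 : ℝ) H ∧ ∃ i : Fin N, fA i t = 0 ∨ fB i t = 0})
    (hS0 : ∀ i, SA i 0 = SB i 0)
    (hrA : ∀ (i : Fin N) (t : ℝ), t ∈ Set.Icc (0 : ℝ) H → rA i t = Ψ (SA i t) (eh i t))
    (hrB : ∀ (i : Fin N) (t : ℝ), t ∈ Set.Icc (0 : ℝ) H → rB i t = Ψ (SB i t) (eh i t))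
    (hfA : ∀ (i : Fin N) (t : ℝ), t ∈ Set.Icc (0 : ℝ) H → fA i t = f i (fun j => rA j t) (R t))
    (hfB : ∀ (i : Fin N) (t : ℝ), t ∈ Set.Icc (0 : ℝ) H → fB i t = f i (fun j => rB j t) (R t))
    (hAint : ∀ i : Fin N, IntervalIntegrable (OA i) MeasureTheory.volume 0 H)
    (hBint : ∀ i : Fin N, IntervalIntegrable (OB i) MeasureTheory.volume 0 H)
    (hSA : ∀ (i : Fin N) (t : ℝ), t ∈ Set.Icc (0 : ℝ) H →
      SA i t = SA i 0 + ∫ s in (0:ℝ)..t, OA i s)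
    (hSB : ∀ (i : Fin N) (t : ℝ), t ∈ Set.Icc (0 : ℝ) H →
      SB i t = SB i 0 + ∫ s in (0:ℝ)..t, OB i s)
    (hO : ∀ (i : Fin N) (t : ℝ), t ∈ Set.Icc (0 : ℝ) H → (fA i t < 0 ∨ 0 ≤ fB i t) →
      OA i t ≤ OB i t) :
    ∀ (i : Fin N) (t : ℝ), t ∈ Set.Icc (0 : ℝ) H →
      (∫ s in (0:ℝ)..t, OA i s) ≤ (∫ s in (0:ℝ)..t, OB i s) := by
  have cSA : ∀ i, ContinuousOn (SA i) (Set.Icc 0 H) := fun i => aux_contS hH (hAint i) (hSA i)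
  have cSB : ∀ i, ContinuousOn (SB i) (Set.Icc 0 H) := fun i => aux_contS hH (hBint i) (hSB i)
  have cfA : ∀ i, ContinuousOn (fA i) (Set.Icc 0 H) := fun i =>
    aux_contf (f i) (hf i) Ψ hΨ R hR SA eh rA (fA i) cSA heh hrA (hfA i)
  have cfB : ∀ i, ContinuousOn (fB i) (Set.Icc 0 H) := fun i =>
    aux_contf (f i) (hf i) Ψ hΨ R hR SB eh rB (fB i) cSB heh hrB (hfB i)
  have main : Set.Icc 0 H ⊆ {t | ∀ i, SA i t ≤ SB i t} := by
    refine IsClosed.Icc_subset_of_forall_exists_gt ?_ ?_ ?_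
    · have : {t | ∀ i, SA i t ≤ SB i t} ∩ Set.Icc 0 H
          = Set.Icc 0 H ∩ ⋂ i, {t ∈ Set.Icc 0 H | SA i t ≤ SB i t} := by
        ext t
        simp only [Set.mem_inter_iff, Set.mem_ofPred_eq, Set.mem_iInter]
        exact ⟨fun h => ⟨h.2, fun i => ⟨h.2, h.1 i⟩⟩, fun h => ⟨fun i => (h.2 i).2, h.1⟩⟩
      rw [this]
      exact isClosed_Icc.inter (isClosed_iInter fun i =>
        isClosed_Icc.isClosed_le (cSA i) (cSB i))
    · intro i; exact (hS0 i).le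
    · rintro x ⟨hxG, hx0, hxH⟩ y hy
      have hy : x < y := hy
      -- choose z with no zeros in (x, z]
      obtain ⟨z, hxz, hzy, hzH, hz0⟩ : ∃ z, x < z ∧ z ≤ y ∧ z ≤ H ∧ ∀ t ∈ Set.Ioc x z,
          ∀ i, fA i t ≠ 0 ∧ fB i t ≠ 0 := by
        have hev : ∀ᶠ z in nhdsWithin x (Set.Ioi x), ∀ t ∈ Set.Ioc x z,
            t ∉ {t : ℝ | t ∈ Set.Icc (0 : ℝ) H ∧ ∃ i : Fin N, fA i t = 0 ∨ fB i t = 0} \ {x} := by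
          have hc : IsClosed ({t : ℝ | t ∈ Set.Icc (0 : ℝ) H ∧
              ∃ i : Fin N, fA i t = 0 ∨ fB i t = 0} \ {x}) := (hfin.sdiff).isClosed
          have hm := hc.isOpen_compl.mem_nhds (show x ∈ _ from fun h => h.2 rfl)
          obtain ⟨ε, hε, hb⟩ := Metric.mem_nhds_iff.1 hm
          filter_upwards [Ioo_mem_nhdsGT (show x < x + ε by linarith)] with z hz t ht
          refine hb ?_
          rw [Metric.mem_ball, Real.dist_eq, abs_lt]
          constructor <;> linarith [ht.1, ht.2, hz.2]
        obtain ⟨z, h1, h2⟩ := (hev.and (Ioo_mem_nhdsGT (lt_min hy hxH))).exists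
        refine ⟨z, h2.1, (h2.2.trans_le (min_le_left _ _)).le,
          (h2.2.trans_le (min_le_right _ _)).le, fun t ht i => ?_⟩
        have hn := h1 t ht
        have htH : t ∈ Set.Icc 0 H :=
          ⟨hx0.trans ht.1.le, ht.2.trans (h2.2.trans_le (min_le_right _ _)).le⟩
        constructor
        · intro h0; exact hn ⟨⟨htH, i, Or.inl h0⟩, ht.1.ne'⟩
        · intro h0; exact hn ⟨⟨htH, i, Or.inr h0⟩, ht.1.ne'⟩
      refine ⟨z, ?_, hxz, hzy⟩
      have hsub : Set.Ioc x z ⊆ Set.Icc 0 H := fun t ht => ⟨hx0.trans ht.1.le, ht.2.trans hzH⟩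
      have hzI : z ∈ Set.Icc 0 H := hsub ⟨hxz, le_rfl⟩
      have hxI : x ∈ Set.Icc 0 H := ⟨hx0, hxH.le⟩
      have step : ∀ i, (fA i z < 0 ∨ 0 ≤ fB i z) → SA i z ≤ SB i z := by
        intro i hi
        have sA := aux_sign_s12 ((cfA i).mono hsub) (fun t ht => (hz0 t ht i).1) hxz
        have sB := aux_sign_s12 ((cfB i).mono hsub) (fun t ht => (hz0 t ht i).2) hxz
        have hle : ∀ t ∈ Set.Ioc x z, OA i t ≤ OB i t := by
          intro t ht
          refine hO i t (hsub ht) ?_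
          rcases hi with h | h
          · exact Or.inl (sA.1 h t ht)
          · exact Or.inr (sB.2 h t ht)
        have sub : ∀ {u v : ℝ}, u ∈ Set.Icc 0 H → v ∈ Set.Icc 0 H →
            Set.uIcc u v ⊆ Set.uIcc 0 H := by
          intro u v hu hv
          rw [Set.uIcc_of_le hH.le]
          exact Set.uIcc_subset_Icc hu hv
        have h0I : (0:ℝ) ∈ Set.Icc 0 H := ⟨le_rfl, hH.le⟩
        have iA := intervalIntegral.integral_add_adjacent_intervals
          ((hAint i).mono_set (sub h0I hxI)) ((hAint i).mono_set (sub hxI hzI))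
        have iB := intervalIntegral.integral_add_adjacent_intervals
          ((hBint i).mono_set (sub h0I hxI)) ((hBint i).mono_set (sub hxI hzI))
        have hI : ∫ s in x..z, OA i s ≤ ∫ s in x..z, OB i s := by
          rw [intervalIntegral.integral_of_le hxz.le, intervalIntegral.integral_of_le hxz.le]
          exact MeasureTheory.setIntegral_mono_on
            ((hAint i).mono_set (sub hxI hzI)).1 ((hBint i).mono_set (sub hxI hzI)).1
            measurableSet_Ioc hle
        have := hxG i
        have a1 := hSA i x hxI
        have a2 := hSA i z hzI
        have b1 := hSB i x hxI
        have b2 := hSB i z hzI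
        linarith
      classical
      by_contra hbad
      simp only [Set.mem_ofPred_eq, not_forall, not_le] at hbad
      obtain ⟨k, hk⟩ := hbad
      let I : Finset (Fin N) := Finset.univ.filter fun i => SB i z < SA i z
      have hkI : k ∈ I := by simp [I, hk]
      have hI : ∀ i ∈ I, 0 ≤ fA i z ∧ fB i z < 0 := by
        intro i hi
        have hi : SB i z < SA i z := by simpa [I] using hi
        by_contra hc
        refine absurd (step i ?_) (not_le.2 hi)
        by_contra hd
        push Not at hd
        exact hc hd
      have hs := aux_vec f hf_anti hf_sum_mono (R z) (fun j => rA j z) (fun j => rB j z) I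
        (by
          intro i hi
          have hi : SB i z < SA i z := by simpa [I] using hi
          simp only [hrA i z hzI, hrB i z hzI]
          exact hΨ_anti _ _ _ hi.le)
        (by
          intro i hi
          have hi : SA i z ≤ SB i z := by simpa [I] using hi
          simp only [hrA i z hzI, hrB i z hzI]
          exact hΨ_anti _ _ _ hi)
      simp only [← hfA _ z hzI, ← hfB _ z hzI] at hs
      have p1 : 0 ≤ ∑ j ∈ I, fA j z := Finset.sum_nonneg fun i hi => (hI i hi).1
      have p2 : ∑ j ∈ I, fB j z < 0 := Finset.sum_neg (fun i hi => (hI i hi).2) ⟨k, hkI⟩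
      linarith
  intro i t ht
  have := main ht i
  have a := hSA i t ht
  have b := hSB i t ht
  have c := hS0 i
  linarith

/-- key pathwise claim in the proof of Theorem 3: counterfactual
interleaving experiment with feedback loops under a fixed partition `𝒯 = T`,
`𝒞 = Tᶜ`, with `e_i^C = e_i^T ≥ 0`, under Assumptions 1, 3 and 5, with
solutions of the experiment / global-treatment / global-control dynamics
having common (nonnegative) initial states. Then each seller's cumulative
experimental outcome is bounded above by its global-treatment counterpart and
below by its global-control counterpart. -/
theorem stmt12 (N : ℕ) (H : ℝ) (hH : 0 < H)
    (eT eC ehT ehC : Fin N → ℝ → ℝ) (R : ℝ → ℝ)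
    (f : Fin N → (Fin N → ℝ) → ℝ → ℝ) (ΨT ΨC : ℝ → ℝ → ℝ)
    (T : Finset (Fin N))
    -- equal, nonnegative true metrics
    (he_eq : ∀ (i : Fin N) (t : ℝ), t ∈ Set.Icc (0 : ℝ) H → eC i t = eT i t)
    (he_nonneg : ∀ (i : Fin N) (t : ℝ), t ∈ Set.Icc (0 : ℝ) H → 0 ≤ eC i t)
    -- Assumption 1
    (hf_anti : ∀ (i j : Fin N), j ≠ i → ∀ (r : Fin N → ℝ) (R₀ x y : ℝ), x ≤ y →
      f i (Function.update r j y) R₀ ≤ f i (Function.update r j x) R₀)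
    (hf_sum_mono : ∀ (I : Finset (Fin N)) (i : Fin N), i ∈ I →
      ∀ (r : Fin N → ℝ) (R₀ x y : ℝ), x ≤ y →
      ∑ j ∈ I, f j (Function.update r i x) R₀ ≤ ∑ j ∈ I, f j (Function.update r i y) R₀)
    (hΨT_anti : ∀ e : ℝ, ∀ s s' : ℝ, s ≤ s' → ΨT s' e ≤ ΨT s e)
    (hΨC_anti : ∀ e : ℝ, ∀ s s' : ℝ, s ≤ s' → ΨC s' e ≤ ΨC s e)
    (hΨT_mono : ∀ s : ℝ, ∀ e e' : ℝ, e ≤ e' → ΨT s e ≤ ΨT s e')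
    (hΨC_mono : ∀ s : ℝ, ∀ e e' : ℝ, e ≤ e' → ΨC s e ≤ ΨC s e')
    -- Assumption 5
    (α : ℝ) (hα : 1 < α)
    (hΨα : ∀ s : ℝ, 0 ≤ s → ∀ (i : Fin N) (t : ℝ), t ∈ Set.Icc (0 : ℝ) H →
      ΨT s (ehT i t) = α * ΨC s (ehC i t))
    (hfα : ∀ (i : Fin N) (r : Fin N → ℝ) (R₀ : ℝ),
      0 ≤ f i r R₀ → f i r R₀ ≤ f i (fun j => α * r j) R₀)
    -- processes
    (SE rT rC fCET fCEC IE OE : Fin N → ℝ → ℝ)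
    (SGT rGT fGT IGT OGT : Fin N → ℝ → ℝ)
    (SGC rGC fGC IGC OGC : Fin N → ℝ → ℝ)
    -- Assumption 3 (with f^{NE} replaced by f^{CE,T} and f^{CE,C})
    (hcont_e : ∀ i : Fin N, ContinuousOn (eT i) (Set.Icc 0 H) ∧
      ContinuousOn (eC i) (Set.Icc 0 H) ∧ ContinuousOn (ehT i) (Set.Icc 0 H) ∧
      ContinuousOn (ehC i) (Set.Icc 0 H))
    (hcont_R : Continuous R)
    (hcont_f : ∀ i : Fin N, Continuous (fun x : (Fin N → ℝ) × ℝ => f i x.1 x.2))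
    (hcont_ΨT : Continuous (fun x : ℝ × ℝ => ΨT x.1 x.2))
    (hcont_ΨC : Continuous (fun x : ℝ × ℝ => ΨC x.1 x.2))
    (hfin : Set.Finite {t : ℝ | t ∈ Set.Icc (0 : ℝ) H ∧
      ∃ i : Fin N, fCET i t = 0 ∨ fCEC i t = 0 ∨ fGT i t = 0 ∨ fGC i t = 0})
    -- common, nonnegative initial states
    (hS0 : ∀ i : Fin N, SE i 0 = SGT i 0 ∧ SE i 0 = SGC i 0)
    (hS0_nonneg : ∀ i : Fin N, 0 ≤ SE i 0)
    -- counterfactual interleaving experiment dynamics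
    (hrT : ∀ (i : Fin N) (t : ℝ), t ∈ Set.Icc (0 : ℝ) H →
      rT i t = ΨT (SE i t) (ehT i t))
    (hrC : ∀ (i : Fin N) (t : ℝ), t ∈ Set.Icc (0 : ℝ) H →
      rC i t = ΨC (SE i t) (ehC i t))
    (hfCET : ∀ (i : Fin N) (t : ℝ), t ∈ Set.Icc (0 : ℝ) H →
      fCET i t = f i (fun j => rT j t) (R t))
    (hfCEC : ∀ (i : Fin N) (t : ℝ), t ∈ Set.Icc (0 : ℝ) H →
      fCEC i t = f i (fun j => rC j t) (R t))
    (hIE : ∀ (i : Fin N) (t : ℝ), t ∈ Set.Icc (0 : ℝ) H →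
      IE i t = if i ∈ T then (if 0 ≤ fCET i t then 1 else 0)
               else (if 0 ≤ fCEC i t then 1 else 0))
    (hOE : ∀ (i : Fin N) (t : ℝ), t ∈ Set.Icc (0 : ℝ) H →
      OE i t = IE i t * (if i ∈ T then eT i t else eC i t))
    (hOE_int : ∀ i : Fin N, IntervalIntegrable (OE i) MeasureTheory.volume 0 H)
    (hSE : ∀ (i : Fin N) (t : ℝ), t ∈ Set.Icc (0 : ℝ) H →
      SE i t = SE i 0 + ∫ s in (0:ℝ)..t, OE i s)
    -- global treatment dynamics
    (hrGT : ∀ (i : Fin N) (t : ℝ), t ∈ Set.Icc (0 : ℝ) H →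
      rGT i t = ΨT (SGT i t) (ehT i t))
    (hfGT : ∀ (i : Fin N) (t : ℝ), t ∈ Set.Icc (0 : ℝ) H →
      fGT i t = f i (fun j => rGT j t) (R t))
    (hIGT : ∀ (i : Fin N) (t : ℝ), t ∈ Set.Icc (0 : ℝ) H →
      IGT i t = if 0 ≤ fGT i t then 1 else 0)
    (hOGT : ∀ (i : Fin N) (t : ℝ), t ∈ Set.Icc (0 : ℝ) H →
      OGT i t = IGT i t * eT i t)
    (hOGT_int : ∀ i : Fin N, IntervalIntegrable (OGT i) MeasureTheory.volume 0 H)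
    (hSGT : ∀ (i : Fin N) (t : ℝ), t ∈ Set.Icc (0 : ℝ) H →
      SGT i t = SGT i 0 + ∫ s in (0:ℝ)..t, OGT i s)
    -- global control dynamics
    (hrGC : ∀ (i : Fin N) (t : ℝ), t ∈ Set.Icc (0 : ℝ) H →
      rGC i t = ΨC (SGC i t) (ehC i t))
    (hfGC : ∀ (i : Fin N) (t : ℝ), t ∈ Set.Icc (0 : ℝ) H →
      fGC i t = f i (fun j => rGC j t) (R t))
    (hIGC : ∀ (i : Fin N) (t : ℝ), t ∈ Set.Icc (0 : ℝ) H →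
      IGC i t = if 0 ≤ fGC i t then 1 else 0)
    (hOGC : ∀ (i : Fin N) (t : ℝ), t ∈ Set.Icc (0 : ℝ) H →
      OGC i t = IGC i t * eC i t)
    (hOGC_int : ∀ i : Fin N, IntervalIntegrable (OGC i) MeasureTheory.volume 0 H)
    (hSGC : ∀ (i : Fin N) (t : ℝ), t ∈ Set.Icc (0 : ℝ) H →
      SGC i t = SGC i 0 + ∫ s in (0:ℝ)..t, OGC i s) :
    ∀ (i : Fin N) (t : ℝ), t ∈ Set.Icc (0 : ℝ) H →
      (∫ s in (0:ℝ)..t, OE i s) ≤ (∫ s in (0:ℝ)..t, OGT i s) ∧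
      (∫ s in (0:ℝ)..t, OGC i s) ≤ (∫ s in (0:ℝ)..t, OE i s) := by
  have hTn : ∀ (i : Fin N) (t : ℝ), t ∈ Set.Icc (0 : ℝ) H → 0 ≤ eT i t := fun i t ht =>
    he_eq i t ht ▸ he_nonneg i t ht
  have hOE' : ∀ (i : Fin N) (t : ℝ), t ∈ Set.Icc (0 : ℝ) H → OE i t = IE i t * eT i t := by
    intro i t ht
    rw [hOE i t ht, he_eq i t ht, ite_self]
  have hIE0 : ∀ (i : Fin N) (t : ℝ), t ∈ Set.Icc (0 : ℝ) H → 0 ≤ IE i t ∧ IE i t ≤ 1 := by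
    intro i t ht
    rw [hIE i t ht]
    split_ifs <;> norm_num
  have hSEn : ∀ (i : Fin N) (t : ℝ), t ∈ Set.Icc (0 : ℝ) H → 0 ≤ SE i t := by
    intro i t ht
    rw [hSE i t ht]
    refine add_nonneg (hS0_nonneg i) (intervalIntegral.integral_nonneg ht.1 fun u hu => ?_)
    have hu' : u ∈ Set.Icc 0 H := ⟨hu.1, hu.2.trans ht.2⟩
    rw [hOE' i u hu']
    exact mul_nonneg (hIE0 i u hu').1 (hTn i u hu')
  have hscale : ∀ (i : Fin N) (t : ℝ), t ∈ Set.Icc (0 : ℝ) H → 0 ≤ fCEC i t → 0 ≤ fCET i t := by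
    intro i t ht h
    have e : (fun j => rT j t) = fun j => α * rC j t := by
      funext j
      rw [hrT j t ht, hrC j t ht, hΨα _ (hSEn j t ht) j t ht]
    rw [hfCET i t ht, e]
    rw [hfCEC i t ht] at h
    exact h.trans (hfα i _ _ h)
  have hup := aux_main hH f hf_anti hf_sum_mono hcont_f ΨT hcont_ΨT hΨT_anti R hcont_R ehT
    (fun i => (hcont_e i).2.2.1) SE rT fCET OE SGT rGT fGT OGT
    (hfin.subset (fun t ⟨ht, i, hi⟩ => ⟨ht, i, by tauto⟩)) (fun i => (hS0 i).1)
    hrT hrGT hfCET hfGT hOE_int hOGT_int hSE hSGT (by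
      intro i t ht h
      rw [hOE' i t ht, hOGT i t ht]
      refine mul_le_mul_of_nonneg_right ?_ (hTn i t ht)
      rcases h with h | h
      · have h2 : ¬ 0 ≤ fCEC i t := fun h' => absurd (hscale i t ht h') (not_le.2 h)
        rw [hIE i t ht, hIGT i t ht, if_neg (not_le.2 h), if_neg h2, ite_self]
        split_ifs <;> norm_num
      · rw [hIGT i t ht, if_pos h]
        exact (hIE0 i t ht).2)
  have hlo := aux_main hH f hf_anti hf_sum_mono hcont_f ΨC hcont_ΨC hΨC_anti R hcont_R ehC
    (fun i => (hcont_e i).2.2.2) SGC rGC fGC OGC SE rC fCEC OE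
    (hfin.subset (fun t ⟨ht, i, hi⟩ => ⟨ht, i, by tauto⟩)) (fun i => (hS0 i).2.symm)
    hrGC hrC hfGC hfCEC hOGC_int hOE_int hSGC hSE (by
      intro i t ht h
      rw [hOE' i t ht, hOGC i t ht, he_eq i t ht]
      refine mul_le_mul_of_nonneg_right ?_ (hTn i t ht)
      rcases h with h | h
      · rw [hIGC i t ht, if_neg (not_le.2 h)]
        exact (hIE0 i t ht).1
      · rw [hIE i t ht, hIGC i t ht, if_pos h, if_pos (hscale i t ht h), ite_self]
        split_ifs <;> norm_num)
  exact fun i t ht => ⟨hup i t ht, hlo i t ht⟩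
end
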